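/- arXiv:2309.12649 — 6 statements merged into one kernel-verified Lean document; each statement's English description precedes it below -/
import Mathlib

section
/- Fix an integer N ≥ 2, t ∈ [0,1], n ≥ 1 and integers a_1, …, a_n all ≥ N. Let s^t_{N,n} be the number defined recursively by s^t_{N,0} = t and s^t_{N,k} = 1 − N/(a_k + s^t_{N,k−1}) for 1 ≤ k ≤ n. Then for every x ∈ [0,1], ρ^t_N({y ∈ I(a_1,…,a_n) : R_N^n(y) < x}) = ρ^t_N(I(a_1,…,a_n)) · Nx/(N − (1−x)(1−s^t_{N,n})). (Generalized Brodén–Borel–Lévy formula.) -/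
open MeasureTheory Set Real Filter

/-- The Rényi-type continued fraction map `R_N`. -/
noncomputable def RN (N : ℕ) (x : ℝ) : ℝ :=
  if x = 1 then 0 else (N : ℝ) / (1 - x) - ⌊(N : ℝ) / (1 - x)⌋

/-- `digit N k x` is the `(k+1)`-st digit `a_{k+1}(x)`. -/
noncomputable def digit (N k : ℕ) (x : ℝ) : ℤ :=
  ⌊(N : ℝ) / (1 - (RN N)^[k] x)⌋

/-- The cylinder `I(a_1, …, a_n)`. -/
def cyl (N n : ℕ) (a : ℕ → ℤ) : Set ℝ :=
  {x | x ∈ Set.Icc (0 : ℝ) 1 ∧ Irrational x ∧ ∀ k < n, digit N k x = a k}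

/-- The conditional probability measure `ρ^t_N`, with density
`N(N-1+t)/[N-(1-x)(1-t)]²` on `[0,1]`. -/
noncomputable def rhoT (N : ℕ) (t : ℝ) : Measure ℝ :=
  (volume.restrict (Set.Icc (0 : ℝ) 1)).withDensity fun x =>
    ENNReal.ofReal ((N : ℝ) * ((N : ℝ) - 1 + t) / ((N : ℝ) - (1 - x) * (1 - t)) ^ 2)

/-- `s^t_{N,k}` built from a prescribed digit sequence `a`. -/
noncomputable def sRec (N : ℕ) (t : ℝ) (a : ℕ → ℤ) : ℕ → ℝ
  | 0 => t
  | k + 1 => 1 - (N : ℝ) / ((a k : ℝ) + sRec N t a k)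

noncomputable def dens (N : ℕ) (t x : ℝ) : ℝ :=
  (N : ℝ) * ((N : ℝ) - 1 + t) / ((N : ℝ) - (1 - x) * (1 - t)) ^ 2

lemma D_pos {N : ℕ} (hN : 2 ≤ N) {t x : ℝ} (ht : t ∈ Set.Icc (0 : ℝ) 1)
    (hx : x ∈ Set.Icc (0 : ℝ) 1) : 0 < (N : ℝ) - (1 - x) * (1 - t) := by
  have h2 : (2 : ℝ) ≤ N := by exact_mod_cast hN
  nlinarith [mul_nonneg hx.1 (sub_nonneg.2 ht.2), ht.1]

lemma dens_nonneg {N : ℕ} (hN : 2 ≤ N) {t : ℝ} (ht : t ∈ Set.Icc (0 : ℝ) 1) (x : ℝ) :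
    0 ≤ dens N t x := by
  have h2 : (2 : ℝ) ≤ N := by exact_mod_cast hN
  unfold dens
  apply div_nonneg _ (sq_nonneg _)
  apply mul_nonneg <;> linarith [ht.1]

lemma rhoT_apply (N : ℕ) (t : ℝ) {A : Set ℝ} (hA : MeasurableSet A) (hs : A ⊆ Set.Icc 0 1) :
    rhoT N t A = ∫⁻ y in A, ENNReal.ofReal (dens N t y) := by
  unfold rhoT
  rw [withDensity_apply _ hA, Measure.restrict_restrict hA, inter_eq_left.2 hs]
  rfl

lemma irr_ae : ∀ᵐ y : ℝ, Irrational y := by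
  have : (volume : Measure ℝ) (Set.range ((↑) : ℚ → ℝ)) = 0 :=
    (Set.countable_range _).measure_zero _
  exact compl_mem_ae_iff.2 this

lemma rhoT_ac (N : ℕ) (t : ℝ) : rhoT N t ≪ volume :=
  (withDensity_absolutelyContinuous _ _).trans Measure.absolutelyContinuous_restrict

lemma rhoT_Icc {N : ℕ} (hN : 2 ≤ N) {t x : ℝ} (ht : t ∈ Set.Icc (0 : ℝ) 1)
    (hx : x ∈ Set.Icc (0 : ℝ) 1) :
    rhoT N t (Set.Icc 0 x) = ENNReal.ofReal ((N : ℝ) * x / ((N : ℝ) - (1 - x) * (1 - t))) := by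
  have hsub : Set.Icc 0 x ⊆ Set.Icc (0 : ℝ) 1 := Icc_subset_Icc le_rfl hx.2
  rw [rhoT_apply N t measurableSet_Icc hsub]
  have hc : ContinuousOn (dens N t) (Set.Icc 0 x) := by
    unfold dens
    apply ContinuousOn.div (by fun_prop) (by fun_prop)
    intro y hy
    exact pow_ne_zero _ (D_pos hN ht (hsub hy)).ne'
  rw [← ofReal_integral_eq_lintegral_ofReal hc.integrableOn_Icc
    (Eventually.of_forall (dens_nonneg hN ht))]
  congr 1
  rw [integral_Icc_eq_integral_Ioc, ← intervalIntegral.integral_of_le hx.1]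
  rw [intervalIntegral.integral_eq_sub_of_hasDerivAt
    (f := fun y => (N : ℝ) * y / ((N : ℝ) - (1 - y) * (1 - t)))]
  · simp
  · intro y hy
    rw [uIcc_of_le hx.1] at hy
    have hD := (D_pos hN ht (hsub hy)).ne'
    have h1 : HasDerivAt (fun y : ℝ => (N : ℝ) * y) N y := by
      simpa using (hasDerivAt_id y).const_mul (N : ℝ)
    have h2 : HasDerivAt (fun y : ℝ => (N : ℝ) - (1 - y) * (1 - t)) (1 - t) y := by
      have := (((hasDerivAt_id y).const_sub 1).mul_const (1 - t)).const_sub (N : ℝ)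
      simpa using this
    refine (h1.div h2 hD).congr_deriv ?_
    unfold dens
    congr 1
    ring
  · apply ContinuousOn.intervalIntegrable
    rwa [uIcc_of_le hx.1]

lemma rhoT_base {N : ℕ} (hN : 2 ≤ N) {t x : ℝ} (ht : t ∈ Set.Icc (0 : ℝ) 1)
    (hx : x ∈ Set.Icc (0 : ℝ) 1) (a : ℕ → ℤ) :
    rhoT N t {y | y ∈ cyl N 0 a ∧ (RN N)^[0] y < x} =
      ENNReal.ofReal ((N : ℝ) * x / ((N : ℝ) - (1 - x) * (1 - t))) := by
  rw [← rhoT_Icc hN ht hx]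
  apply measure_congr
  apply (rhoT_ac N t).ae_le
  have hx' : ∀ᵐ y : ℝ, y ≠ x := by
    exact compl_mem_ae_iff.2 (measure_singleton x)
  filter_upwards [irr_ae, hx'] with y hy hyx
  apply propext
  change (y ∈ cyl N 0 a ∧ y < x) ↔ y ∈ Set.Icc 0 x
  constructor
  · rintro ⟨h, h'⟩
    exact ⟨h.1.1, h'.le⟩
  · rintro ⟨h, h'⟩
    exact ⟨⟨⟨h, h'.trans hx.2⟩, hy, by simp⟩, lt_of_le_of_ne h' hyx⟩

lemma rhoT_cyl0 {N : ℕ} (hN : 2 ≤ N) {t : ℝ} (ht : t ∈ Set.Icc (0 : ℝ) 1) (a : ℕ → ℤ) :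
    rhoT N t (cyl N 0 a) = 1 := by
  have h1 : (1 : ℝ) ∈ Set.Icc (0 : ℝ) 1 := by simp
  have h2 : (2 : ℝ) ≤ N := by exact_mod_cast hN
  have : rhoT N t (cyl N 0 a) = rhoT N t (Set.Icc 0 1) := by
    apply measure_congr
    apply (rhoT_ac N t).ae_le
    filter_upwards [irr_ae] with y hy
    apply propext
    change (y ∈ cyl N 0 a) ↔ y ∈ Set.Icc 0 1
    exact ⟨fun h => h.1, fun h => ⟨h, hy, by simp⟩⟩
  rw [this, rhoT_Icc hN ht h1]
  have : (N : ℝ) ≠ 0 := by linarith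
  simp [this]

lemma meas_RN (N : ℕ) : Measurable (RN N) := by
  unfold RN
  apply Measurable.ite (measurableSet_singleton 1) measurable_const
  have h : Measurable fun x : ℝ => (N : ℝ) / (1 - x) := by fun_prop
  exact h.sub (measurable_from_top.comp (Int.measurable_floor.comp h))

lemma meas_cyl (N n : ℕ) (a : ℕ → ℤ) : MeasurableSet (cyl N n a) := by
  have : cyl N n a = Set.Icc 0 1 ∩ ({x | Irrational x} ∩ ⋂ k, ⋂ (_ : k < n),
      Set.preimage (digit N k) {a k}) := by
    ext; simp [cyl]
  rw [this]
  refine measurableSet_Icc.inter (MeasurableSet.inter ?_ ?_)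
  · exact (Set.countable_range ((↑) : ℚ → ℝ)).measurableSet.compl
  · refine MeasurableSet.iInter fun k => MeasurableSet.iInter fun _ => ?_
    have h : Measurable (digit N k) := by
      unfold digit
      have := (meas_RN N).iterate k
      exact Int.measurable_floor.comp (by fun_prop)
    exact h (measurableSet_singleton _)

lemma meas_set (N n : ℕ) (a : ℕ → ℤ) (x : ℝ) :
    MeasurableSet {y | y ∈ cyl N n a ∧ (RN N)^[n] y < x} :=
  (meas_cyl N n a).inter (((meas_RN N).iterate n) measurableSet_Iio)

noncomputable def phi (N : ℕ) (b : ℤ) (u : ℝ) : ℝ := 1 - (N : ℝ) / ((b : ℝ) + u)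

/-- Key pushforward identity. -/
lemma rhoT_image {N : ℕ} (hN : 2 ≤ N) {t : ℝ} (ht : t ∈ Set.Icc (0 : ℝ) 1) {b : ℤ}
    (hb : (N : ℤ) ≤ b) {A : Set ℝ} (hA : MeasurableSet A) (hs : A ⊆ Set.Icc 0 1) 
    (hA' : MeasurableSet (Set.image (phi N b) A)) :
    rhoT N t (Set.image (phi N b) A) =
      ENNReal.ofReal (((N : ℝ) - 1 + t) / (((b : ℝ) + t - 1) * (b + t))) *
        rhoT N (1 - (N : ℝ) / ((b : ℝ) + t)) A := by
  have h2 : (2 : ℝ) ≤ N := by exact_mod_cast hN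
  have hb' : (N : ℝ) ≤ b := by exact_mod_cast hb
  have hsub : Set.image (phi N b) A ⊆ Set.Icc 0 1 := by
    rintro _ ⟨u, hu, rfl⟩
    have h0 := (hs hu).1
    unfold phi
    have hp : 0 < (b : ℝ) + u := by linarith
    refine ⟨?_, ?_⟩
    · rw [sub_nonneg, div_le_one hp]; linarith
    · have : 0 ≤ (N : ℝ) / (b + u) := by positivity
      linarith
  rw [rhoT_apply N t hA' hsub, rhoT_apply N _ hA hs]
  rw [lintegral_image_eq_lintegral_abs_deriv_mul hA
    (f' := fun u => (N : ℝ) / ((b : ℝ) + u) ^ 2)]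
  · rw [← lintegral_const_mul' _ _ ENNReal.ofReal_ne_top]
    apply setLIntegral_congr_fun hA
    intro u hu
    have h0 := (hs hu).1
    have ht0 := ht.1
    have hp : 0 < (b : ℝ) + u := by linarith
    have hq : 0 < (b : ℝ) + t := by linarith
    have hq1 : 0 < (b : ℝ) + t - 1 := by linarith
    have hr : 0 < (b : ℝ) + t - 1 + u := by linarith
    have hc : 0 ≤ ((N : ℝ) - 1 + t) / (((b : ℝ) + t - 1) * (b + t)) := by
      apply div_nonneg
      · linarith
      · positivity
    simp only
    rw [← ENNReal.ofReal_mul (abs_nonneg _), ← ENNReal.ofReal_mul hc,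
      abs_of_nonneg (by positivity)]
    congr 1
    unfold dens phi
    have e1 : (N : ℝ) - (1 - (1 - (N : ℝ) / (b + u))) * (1 - t) =
        N * (b + t - 1 + u) / (b + u) := by field_simp; ring
    have e2 : (N : ℝ) - (1 - u) * (1 - (1 - (N : ℝ) / (b + t))) =
        N * (b + t - 1 + u) / (b + t) := by field_simp; ring
    have e3 : (N : ℝ) - 1 + (1 - (N : ℝ) / (b + t)) = N * (b + t - 1) / (b + t) := by
      field_simp; ring
    rw [e1, e2, e3]
    have : (N : ℝ) ≠ 0 := by linarith
    field_simp
  · intro u hu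
    have h0 := (hs hu).1
    have hp : (b : ℝ) + u ≠ 0 := by linarith
    have h := (((hasDerivAt_id u).const_add (b : ℝ)).inv hp).const_mul (N : ℝ) |>.const_sub 1
    apply HasDerivAt.hasDerivWithinAt
    refine h.congr_deriv ?_
    simp only [id]
    field_simp
  · intro u hu v hv h
    have h0 := (hs hu).1
    have h1 := (hs hv).1
    have hp : (b : ℝ) + u ≠ 0 := by linarith
    have hq : (b : ℝ) + v ≠ 0 := by linarith
    have hn : (N : ℝ) ≠ 0 := by linarith
    unfold phi at h
    have h' : (N : ℝ) / (b + u) = N / (b + v) := by linarith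
    field_simp at h'
    linarith

lemma RN_phi {N : ℕ} (hN : 2 ≤ N) {b : ℤ} (hb : (N : ℤ) ≤ b) {u : ℝ} (hu : u ∈ Set.Icc (0 : ℝ) 1)
    (hi : Irrational u) : ⌊(N : ℝ) / (1 - phi N b u)⌋ = b ∧ RN N (phi N b u) = u ∧
      phi N b u ∈ Set.Icc (0 : ℝ) 1 ∧ Irrational (phi N b u) := by
  have h2 : (2 : ℝ) ≤ N := by exact_mod_cast hN
  have hb' : (N : ℝ) ≤ b := by exact_mod_cast hb
  have h0 := hu.1
  have hu1 : u < 1 := lt_of_le_of_ne hu.2 hi.ne_one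
  have hn : (N : ℝ) ≠ 0 := by linarith
  have hp : 0 < (b : ℝ) + u := by linarith
  have e : (N : ℝ) / (1 - phi N b u) = b + u := by
    unfold phi; rw [sub_sub_cancel]; field_simp
  have hf : ⌊(N : ℝ) / (1 - phi N b u)⌋ = b := by
    rw [e, Int.floor_eq_iff]; constructor <;> linarith
  have hpos : 0 < (N : ℝ) / (b + u) := by positivity
  refine ⟨hf, ?_, ⟨?_, ?_⟩, ?_⟩
  · unfold RN
    rw [if_neg, hf, e]
    · ring
    · unfold phi; linarith
  · unfold phi
    rw [sub_nonneg, div_le_one hp]; linarith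
  · unfold phi; linarith
  · unfold phi
    rintro ⟨q, hq⟩
    apply hi
    refine ⟨N / (1 - q) - b, ?_⟩
    push_cast
    rw [hq, sub_sub_cancel]
    field_simp
    ring

lemma inv_phi {N : ℕ} (hN : 2 ≤ N) {b : ℤ} {y : ℝ} (hy : y ∈ Set.Icc (0 : ℝ) 1)
    (hi : Irrational y) (hf : ⌊(N : ℝ) / (1 - y)⌋ = b) :
    phi N b (RN N y) = y ∧ RN N y ∈ Set.Icc (0 : ℝ) 1 ∧ Irrational (RN N y) := by
  have h2 : (2 : ℝ) ≤ N := by exact_mod_cast hN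
  have hn : (N : ℝ) ≠ 0 := by linarith
  have hy1 : y ≠ 1 := hi.ne_one
  have hy2 : 1 - y ≠ 0 := fun h => hy1 (by linarith)
  have e : RN N y = N / (1 - y) - b := by unfold RN; rw [if_neg hy1, hf]
  obtain ⟨h3, h4⟩ := Int.floor_eq_iff.1 hf
  refine ⟨?_, ⟨?_, ?_⟩, ?_⟩
  · unfold phi; rw [e]
    rw [add_sub_cancel]; field_simp; ring
  · rw [e]; linarith
  · rw [e]; linarith
  · rw [e]
    rintro ⟨q, hq⟩
    apply hi
    refine ⟨1 - N / (q + b), ?_⟩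
    push_cast
    rw [hq, sub_add_cancel]; field_simp; ring

lemma cyl_succ {N : ℕ} (hN : 2 ≤ N) (n : ℕ) (a : ℕ → ℤ) (hb : (N : ℤ) ≤ a 0) :
    cyl N (n + 1) a = Set.image (phi N (a 0)) (cyl N n (fun k => a (k + 1))) := by
  ext y
  constructor
  · rintro ⟨h1, h2, h3⟩
    have hf := h3 0 (by omega)
    obtain ⟨g1, g2, g3⟩ := inv_phi hN h1 h2 hf
    exact ⟨RN N y, ⟨g2, g3, fun k hk => h3 (k + 1) (by omega)⟩, g1⟩
  · rintro ⟨u, ⟨h1, h2, h3⟩, rfl⟩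
    obtain ⟨g1, g2, g3, g4⟩ := RN_phi hN hb h1 h2
    refine ⟨g3, g4, fun k hk => ?_⟩
    cases k with
    | zero => exact g1
    | succ k =>
      have := h3 k (by omega)
      unfold digit at this ⊢
      rw [Function.iterate_succ_apply, g2]
      exact this

lemma set_succ {N : ℕ} (hN : 2 ≤ N) (n : ℕ) (a : ℕ → ℤ) (hb : (N : ℤ) ≤ a 0) (x : ℝ) :
    {y | y ∈ cyl N (n + 1) a ∧ (RN N)^[n + 1] y < x} =
      Set.image (phi N (a 0)) {y | y ∈ cyl N n (fun k => a (k + 1)) ∧ (RN N)^[n] y < x} := by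
  rw [cyl_succ hN n a hb]
  ext y
  constructor
  · rintro ⟨⟨u, hu, rfl⟩, h⟩
    rw [Function.iterate_succ_apply, (RN_phi hN hb hu.1 hu.2.1).2.1] at h
    exact ⟨u, ⟨hu, h⟩, rfl⟩
  · rintro ⟨u, ⟨hu, h⟩, rfl⟩
    refine ⟨⟨u, hu, rfl⟩, ?_⟩
    rw [Function.iterate_succ_apply, (RN_phi hN hb hu.1 hu.2.1).2.1]
    exact h

lemma sRec_succ (N : ℕ) (t : ℝ) (a : ℕ → ℤ) (n : ℕ) :
    sRec N t a (n + 1) = sRec N (1 - (N : ℝ) / ((a 0 : ℝ) + t)) (fun k => a (k + 1)) n := by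
  induction n with
  | zero => rfl
  | succ n ih => rw [sRec, ih]; rfl

lemma main_aux {N : ℕ} (hN : 2 ≤ N) {x : ℝ} (hx : x ∈ Set.Icc (0 : ℝ) 1) (n : ℕ) :
    ∀ (t : ℝ), t ∈ Set.Icc (0 : ℝ) 1 → ∀ (a : ℕ → ℤ), (∀ k < n, (N : ℤ) ≤ a k) →
    (rhoT N t {y | y ∈ cyl N n a ∧ (RN N)^[n] y < x}).toReal
      = (rhoT N t (cyl N n a)).toReal
        * ((N : ℝ) * x / ((N : ℝ) - (1 - x) * (1 - sRec N t a n))) := by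
  induction n with
  | zero =>
    intro t ht a _
    rw [rhoT_base hN ht hx, rhoT_cyl0 hN ht, ENNReal.toReal_ofReal]
    · simp [sRec]
    · exact div_nonneg (mul_nonneg (Nat.cast_nonneg _) hx.1) (D_pos hN ht hx).le
  | succ n ih =>
    intro t ht a ha
    have hb := ha 0 (by omega)
    have h2 : (2 : ℝ) ≤ N := by exact_mod_cast hN
    have hb' : (N : ℝ) ≤ a 0 := by exact_mod_cast hb
    have hp : 0 < (a 0 : ℝ) + t := by linarith [ht.1]
    have ht' : 1 - (N : ℝ) / ((a 0 : ℝ) + t) ∈ Set.Icc (0 : ℝ) 1 := by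
      refine ⟨?_, ?_⟩
      · rw [sub_nonneg, div_le_one hp]; linarith [ht.1]
      · have : 0 ≤ (N : ℝ) / (a 0 + t) := by positivity
        linarith
    have hm1 := meas_set N (n + 1) a x
    have hm2 := meas_cyl N (n + 1) a
    rw [set_succ hN n a hb] at hm1 ⊢
    rw [cyl_succ hN n a hb] at hm2 ⊢
    rw [rhoT_image hN ht hb (meas_set _ _ _ _) (fun y hy => hy.1.1) hm1,
      rhoT_image hN ht hb (meas_cyl _ _ _) (fun y hy => hy.1) hm2,
      ENNReal.toReal_mul, ENNReal.toReal_mul,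
      ih _ ht' (fun k => a (k + 1)) (fun k hk => ha (k + 1) (by omega)), sRec_succ, mul_assoc]

theorem stmt0 (N : ℕ) (hN : 2 ≤ N) (t : ℝ) (ht : t ∈ Set.Icc (0 : ℝ) 1)
    (n : ℕ) (hn : 1 ≤ n) (a : ℕ → ℤ) (ha : ∀ k < n, (N : ℤ) ≤ a k)
    (x : ℝ) (hx : x ∈ Set.Icc (0 : ℝ) 1) :
    (rhoT N t {y | y ∈ cyl N n a ∧ (RN N)^[n] y < x}).toReal
      = (rhoT N t (cyl N n a)).toReal
        * ((N : ℝ) * x / ((N : ℝ) - (1 - x) * (1 - sRec N t a n))) := by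
  exact main_aux hN hx n t ht a ha
end

section
/- Fix an integer N ≥ 2. For all Borel sets A, B ⊆ [0,1], the extended measure satisfies the disintegration formula ρ̄_N(A × B) = ∫_B ρ^y_N(A) dρ_N(y), where ρ^y_N(A) = ∫_A N(N−1+y)/[N − (1−x)(1−y)]² dx. -/
open MeasureTheory Set Real Filter

/-- The invariant probability measure `ρ_N`, with density
`(log(N/(N-1)))⁻¹/(x+N-1)` on `[0,1]`. -/
noncomputable def rhoN (N : ℕ) : Measure ℝ :=
  (volume.restrict (Set.Icc (0 : ℝ) 1)).withDensity fun x =>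
    ENNReal.ofReal ((Real.log ((N : ℝ) / ((N : ℝ) - 1)))⁻¹ / (x + (N : ℝ) - 1))

/-- The extended measure `ρ̄_N` on the unit square. -/
noncomputable def rhoBar (N : ℕ) : Measure (ℝ × ℝ) :=
  (((volume.restrict (Set.Icc (0 : ℝ) 1)).prod (volume.restrict (Set.Icc (0 : ℝ) 1))).withDensity
    fun p => ENNReal.ofReal
      ((Real.log ((N : ℝ) / ((N : ℝ) - 1)))⁻¹ * ((N : ℝ)
        / ((N : ℝ) - (1 - p.1) * (1 - p.2)) ^ 2)))

theorem stmt3 (N : ℕ) (hN : 2 ≤ N) (A B : Set ℝ)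
    (hA : MeasurableSet A) (hB : MeasurableSet B)
    (hA1 : A ⊆ Set.Icc (0 : ℝ) 1) (hB1 : B ⊆ Set.Icc (0 : ℝ) 1) :
    (rhoBar N (A ×ˢ B)).toReal = ∫ y in B, (rhoT N y A).toReal ∂(rhoN N) := by
  have hN2 : (2 : ℝ) ≤ N := by exact_mod_cast hN
  set I := Set.Icc (0 : ℝ) 1 with hI
  set c : ℝ := (Real.log ((N : ℝ) / ((N : ℝ) - 1)))⁻¹ with hc
  have hmeasT : Measurable (fun y => rhoT N y A) := by
    have h : (fun y => rhoT N y A) = fun y => ∫⁻ x, ENNReal.ofReal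
        ((N : ℝ) * ((N : ℝ) - 1 + y) / ((N : ℝ) - (1 - x) * (1 - y)) ^ 2)
          ∂((volume.restrict I).restrict A) := by
      funext y
      rw [rhoT, withDensity_apply _ hA]
    rw [h]
    apply Measurable.lintegral_prod_right'
      (f := fun p : ℝ × ℝ => ENNReal.ofReal
        ((N : ℝ) * ((N : ℝ) - 1 + p.1) / ((N : ℝ) - (1 - p.2) * (1 - p.1)) ^ 2))
    fun_prop
  have hfin : ∀ y ∈ I, rhoT N y A < ⊤ := by
    intro y hy
    rw [rhoT, withDensity_apply _ hA]
    refine lt_of_le_of_lt (setLIntegral_le_lintegral _ _) ?_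
    refine lt_of_le_of_lt (setLIntegral_mono (g := fun _ => ENNReal.ofReal ((N : ℝ) * N))
      measurable_const ?_) ?_
    · intro x hx
      apply ENNReal.ofReal_le_ofReal
      have h1 : (1 - x) * (1 - y) ≤ 1 := by nlinarith [hx.1, hx.2, hy.1, hy.2]
      have h2 : (1 : ℝ) ≤ ((N : ℝ) - (1 - x) * (1 - y)) ^ 2 := by nlinarith
      have h3 : (N : ℝ) * ((N : ℝ) - 1 + y) ≤ N * N := by nlinarith [hy.2]
      exact (div_le_self (by nlinarith [hy.1]) h2).trans h3
    · rw [setLIntegral_const]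
      exact ENNReal.mul_lt_top ENNReal.ofReal_lt_top (by simp [hI])
  have hae : ∀ᵐ y ∂((rhoN N).restrict B), rhoT N y A < ⊤ := by
    filter_upwards [ae_restrict_mem hB] with y hy using hfin y (hB1 hy)
  rw [integral_toReal hmeasT.aemeasurable hae]
  congr 1
  rw [rhoN, restrict_withDensity hB, lintegral_withDensity_eq_lintegral_mul _ (by fun_prop) hmeasT,
    rhoBar, withDensity_apply _ (hA.prod hB), ← Measure.prod_restrict,
    lintegral_prod_symm' _ (by fun_prop)]
  refine setLIntegral_congr_fun hB ?_
  intro y hyB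
  have hy := hB1 hyB
  simp only [Pi.mul_apply]
  rw [rhoT, withDensity_apply _ hA, ← lintegral_const_mul _ (by fun_prop)]
  refine lintegral_congr fun x => ?_
  have hpos : 0 < y + (N : ℝ) - 1 := by linarith [hy.1]
  have hc0 : 0 ≤ c := by
    apply inv_nonneg.2
    apply Real.log_nonneg
    rw [le_div_iff₀ (by linarith)]
    linarith
  rw [← ENNReal.ofReal_mul (div_nonneg hc0 hpos.le)]
  congr 1
  have : (N : ℝ) - 1 + y = y + N - 1 := by ring
  rw [this]
  rw [div_mul_div_comm, ← mul_div_assoc, ← mul_assoc, mul_comm (y + (N : ℝ) - 1) (_ ^ 2),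
    mul_div_mul_right _ _ hpos.ne']
end

section
/- Fix an integer N ≥ 2. For every x ∈ [0,1], ρ_N([0,x]) = ∫_{[0,1]} Nx/(N − (1−x)(1−s)) dρ_N(s); equivalently, (log(N/(N−1)))^{−1} log((x+N−1)/(N−1)) = (log(N/(N−1)))^{−1} ∫_0^1 Nx / ((N − (1−x)(1−s))(s+N−1)) ds. -/
open MeasureTheory Set Real Filter

lemma aux_int (N : ℕ) (hN : 2 ≤ N) (x : ℝ) (hx : x ∈ Set.Icc (0 : ℝ) 1) :
    ∫ s in (0 : ℝ)..1, (N : ℝ) * x / (((N : ℝ) - (1 - x) * (1 - s)) * (s + (N : ℝ) - 1))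
      = Real.log ((x + (N : ℝ) - 1) / ((N : ℝ) - 1)) := by
  have hN' : (2 : ℝ) ≤ N := by exact_mod_cast hN
  obtain ⟨hx0, hx1⟩ := hx
  have hpos : ∀ s ∈ Set.uIcc (0 : ℝ) 1,
      0 < (N : ℝ) - (1 - x) * (1 - s) ∧ 0 < s + (N : ℝ) - 1 := by
    intro s hs
    rw [Set.uIcc_of_le zero_le_one] at hs
    obtain ⟨h0, h1⟩ := hs
    constructor
    · nlinarith [mul_nonneg hx0 (sub_nonneg.2 h1)]
    · linarith
  rw [intervalIntegral.integral_eq_sub_of_hasDerivAt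
    (f := fun s => Real.log (s + (N : ℝ) - 1) - Real.log ((N : ℝ) - (1 - x) * (1 - s)))]
  · rw [Real.log_div (by linarith) (by linarith)]
    ring_nf
  · intro s hs
    obtain ⟨h1, h2⟩ := hpos s hs
    have d1 : HasDerivAt (fun s : ℝ => s + (N : ℝ) - 1) 1 s :=
      ((hasDerivAt_id s).add_const (N : ℝ)).sub_const 1
    have d2 : HasDerivAt (fun s : ℝ => (N : ℝ) - (1 - x) * (1 - s)) (1 - x) s := by
      have := (((hasDerivAt_id s).const_sub 1).const_mul (1 - x)).const_sub (N : ℝ)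
      refine this.congr_deriv ?_
      ring
    refine ((d1.log h2.ne').sub (d2.log h1.ne')).congr_deriv ?_
    have := h1.ne'
    have := h2.ne'
    rw [div_sub_div _ _ h2.ne' h1.ne', div_eq_div_iff (by positivity) (by positivity)]
    ring
  · apply ContinuousOn.intervalIntegrable
    apply ContinuousOn.div (by fun_prop) (by fun_prop)
    intro s hs
    obtain ⟨h1, h2⟩ := hpos s hs
    positivity

lemma aux_int2 (N : ℕ) (hN : 2 ≤ N) (x : ℝ) (hx : x ∈ Set.Icc (0 : ℝ) 1) :
    ∫ s in (0 : ℝ)..x, (1 / (s + (N : ℝ) - 1))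
      = Real.log ((x + (N : ℝ) - 1) / ((N : ℝ) - 1)) := by
  have hN' : (2 : ℝ) ≤ N := by exact_mod_cast hN
  obtain ⟨hx0, hx1⟩ := hx
  have hpos : ∀ s ∈ Set.uIcc (0 : ℝ) x, 0 < s + (N : ℝ) - 1 := by
    intro s hs
    rw [Set.uIcc_of_le hx0] at hs
    linarith [hs.1]
  rw [intervalIntegral.integral_eq_sub_of_hasDerivAt (f := fun s => Real.log (s + (N : ℝ) - 1))]
  · rw [Real.log_div (by linarith) (by linarith)]
    ring_nf
  · intro s hs
    exact (((hasDerivAt_id s).add_const (N : ℝ)).sub_const 1).log (hpos s hs).ne'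
  · apply ContinuousOn.intervalIntegrable
    apply ContinuousOn.div (by fun_prop) (by fun_prop)
    intro s hs
    exact (hpos s hs).ne'

lemma aux_set (N : ℕ) (hN : 2 ≤ N) (x : ℝ) (hx : x ∈ Set.Icc (0 : ℝ) 1) (g : ℝ → ℝ) :
    ∫ s in Set.Icc 0 x, g s ∂(rhoN N)
      = (Real.log ((N : ℝ) / ((N : ℝ) - 1)))⁻¹ * ∫ s in (0 : ℝ)..x, g s / (s + (N : ℝ) - 1) := by
  have hN' : (2 : ℝ) ≤ N := by exact_mod_cast hN
  have hlog : 0 ≤ Real.log ((N : ℝ) / ((N : ℝ) - 1)) := by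
    apply Real.log_nonneg
    rw [le_div_iff₀ (by linarith)]
    linarith
  unfold rhoN
  rw [setIntegral_withDensity_eq_setIntegral_toReal_smul (by fun_prop)
    (by filter_upwards with s using ENNReal.ofReal_lt_top) _ measurableSet_Icc,
    Measure.restrict_restrict measurableSet_Icc,
    Set.inter_eq_left.2 (Set.Icc_subset_Icc_right hx.2),
    intervalIntegral.integral_of_le hx.1, ← integral_Icc_eq_integral_Ioc, ← integral_const_mul]
  apply setIntegral_congr_fun measurableSet_Icc
  intro s hs
  have h : 0 < s + (N : ℝ) - 1 := by linarith [hs.1]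
  simp only [smul_eq_mul]
  rw [ENNReal.toReal_ofReal (by positivity)]
  ring

theorem stmt5 (N : ℕ) (hN : 2 ≤ N) (x : ℝ) (hx : x ∈ Set.Icc (0 : ℝ) 1) :
    (rhoN N (Set.Icc 0 x)).toReal
      = (∫ s, (N : ℝ) * x / ((N : ℝ) - (1 - x) * (1 - s)) ∂(rhoN N)) ∧
    (Real.log ((N : ℝ) / ((N : ℝ) - 1)))⁻¹ * Real.log ((x + (N : ℝ) - 1) / ((N : ℝ) - 1))
      = (Real.log ((N : ℝ) / ((N : ℝ) - 1)))⁻¹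
        * ∫ s in (0 : ℝ)..1,
            (N : ℝ) * x / (((N : ℝ) - (1 - x) * (1 - s)) * (s + (N : ℝ) - 1)) := by
  have h2 := aux_int N hN x hx
  refine ⟨?_, by rw [h2]⟩
  have hL : (rhoN N (Set.Icc 0 x)).toReal = ∫ s in Set.Icc 0 x, (1 : ℝ) ∂(rhoN N) := by
    simp [Measure.real]
  have hR : (rhoN N).restrict (Set.Icc 0 1) = rhoN N := by
    unfold rhoN
    rw [restrict_withDensity measurableSet_Icc, Measure.restrict_restrict measurableSet_Icc,
      Set.inter_self]
  rw [hL, aux_set N hN x hx, aux_int2 N hN x hx, ← h2]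
  conv_rhs => rw [← hR]
  rw [aux_set N hN 1 (by simp)]
  simp only [div_div]
end

section
/- For every integer N ≥ 2 and all x, t ∈ [0,1], N − 1 ≤ N(N−1+t)(N−1+x)/[N − (1−x)(1−t)]² ≤ N. -/
open MeasureTheory Set Real Filter

theorem stmt13 (N : ℕ) (hN : 2 ≤ N) (x t : ℝ)
    (hx : x ∈ Set.Icc (0 : ℝ) 1) (ht : t ∈ Set.Icc (0 : ℝ) 1) :
    (N : ℝ) - 1
        ≤ (N : ℝ) * ((N : ℝ) - 1 + t) * ((N : ℝ) - 1 + x)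
            / ((N : ℝ) - (1 - x) * (1 - t)) ^ 2 ∧
    (N : ℝ) * ((N : ℝ) - 1 + t) * ((N : ℝ) - 1 + x)
        / ((N : ℝ) - (1 - x) * (1 - t)) ^ 2 ≤ (N : ℝ) := by
  obtain ⟨hx0, hx1⟩ := hx
  obtain ⟨ht0, ht1⟩ := ht
  have hn : (2 : ℝ) ≤ N := by exact_mod_cast hN
  generalize (N : ℝ) = n at *
  obtain ⟨a, rfl⟩ : ∃ a, x = 1 - a := ⟨1 - x, by ring⟩
  obtain ⟨b, rfl⟩ : ∃ b, t = 1 - b := ⟨1 - t, by ring⟩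
  have ha : 0 ≤ a := by linarith
  have hb : 0 ≤ b := by linarith
  have ha1 : a ≤ 1 := by linarith
  have hb1 : b ≤ 1 := by linarith
  have e1 : n - 1 + (1 - b) = n - b := by ring
  have e2 : n - 1 + (1 - a) = n - a := by ring
  have e3 : n - (1 - (1 - a)) * (1 - (1 - b)) = n - a * b := by ring
  rw [e1, e2, e3]
  have hp : 0 ≤ a * b := mul_nonneg ha hb
  have hpa : a * b ≤ a := mul_le_of_le_one_right ha hb1
  have hpb : a * b ≤ b := mul_le_of_le_one_left hb ha1
  have hD : 0 < n - a * b := by linarith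
  have hD2 : 0 < (n - a * b) ^ 2 := by positivity
  constructor
  · rw [le_div_iff₀ hD2]
    have h1 : (n - 1) * (n - a * b) ≤ (n - b) * (n - a) := by
      have h2 : 0 ≤ n * ((1 - a) * (1 - b)) :=
        mul_nonneg (by linarith) (mul_nonneg (by linarith) (by linarith))
      nlinarith
    have h3 : 0 ≤ (n - 1) * (n - a * b) := mul_nonneg (by linarith) hD.le
    calc (n - 1) * (n - a * b) ^ 2 = (n - a * b) * ((n - 1) * (n - a * b)) := by ring
      _ ≤ n * ((n - 1) * (n - a * b)) := mul_le_mul_of_nonneg_right (by linarith) h3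
      _ ≤ n * ((n - b) * (n - a)) := mul_le_mul_of_nonneg_left h1 (by linarith)
      _ = n * (n - b) * (n - a) := by ring
  · rw [div_le_iff₀ hD2, mul_assoc, sq]
    apply mul_le_mul_of_nonneg_left _ (by linarith)
    exact mul_le_mul (by linarith) (by linarith) (by linarith) hD.le
end

section
/- Fix an integer N ≥ 2. Then ε_{N,1} = N log(N/(N−1)) − 1, where ε_{N,1} = sup{ |ρ^t_N(B)/ρ_N(B) − 1| : t ∈ [0,1], B ⊆ [0,1] Borel with ρ_N(B) > 0 }. -/
open MeasureTheory Set Real Filter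

lemma wd_le (μ : Measure ℝ) (f g : ℝ → ℝ) (c : ℝ) (hc : 0 ≤ c) (B : Set ℝ)
    (hB : MeasurableSet B) (h : ∀ x ∈ B, f x ≤ c * g x) :
    (μ.withDensity fun x => ENNReal.ofReal (f x)) B ≤
      ENNReal.ofReal c * (μ.withDensity fun x => ENNReal.ofReal (g x)) B := by
  rw [withDensity_apply _ hB, withDensity_apply _ hB,
    ← lintegral_const_mul' _ _ ENNReal.ofReal_ne_top]
  apply setLIntegral_mono' hB
  intro x hx
  rw [← ENNReal.ofReal_mul hc]
  exact ENNReal.ofReal_le_ofReal (h x hx)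

lemma poly_upper (n u v : ℝ) (hn : 2 ≤ n) (hu0 : 0 ≤ u) (hu1 : u ≤ 1) (hv0 : 0 ≤ v)
    (hv1 : v ≤ 1) : (n - u) * (n - v) ≤ (n - u * v) ^ 2 := by
  have h1 : 0 ≤ u * (1 - v) := mul_nonneg hu0 (by linarith)
  have h2 : 0 ≤ v * (1 - u) := mul_nonneg hv0 (by linarith)
  have h3 : 0 ≤ u * v := mul_nonneg hu0 hv0
  have h4 : u * v ≤ 1 := by nlinarith
  have h5 : (2 : ℝ) * (u * (1 - v) + v * (1 - u)) ≤ n * (u * (1 - v) + v * (1 - u)) :=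
    mul_le_mul_of_nonneg_right hn (by linarith)
  have h7 : 0 ≤ (v * (1 - u)) * (1 - u) := mul_nonneg h2 (by linarith)
  have h8 : 0 ≤ (u * (1 - v)) * (1 - u * v) := mul_nonneg h1 (by linarith)
  nlinarith

lemma poly_lower (n u v : ℝ) (hn : 2 ≤ n) (hu0 : 0 ≤ u) (hu1 : u ≤ 1) (hv0 : 0 ≤ v)
    (hv1 : v ≤ 1) : (n - 1) * (n - u * v) ^ 2 ≤ n * ((n - u) * (n - v)) := by
  have e : n * ((n - u) * (n - v)) - (n - 1) * (n - u * v) ^ 2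
      = (1 - u) * (n ^ 2 * (1 - v)) + u * ((n - 1) * (n - v) * v)
        + (n - 1) * v ^ 2 * (u * (1 - u)) := by ring
  have h1 : 0 ≤ 1 - u := by linarith
  have h2 : 0 ≤ 1 - v := by linarith
  have h3 : 0 ≤ n - 1 := by linarith
  have h4 : 0 ≤ n - v := by linarith
  have : 0 ≤ (1 - u) * (n ^ 2 * (1 - v)) + u * ((n - 1) * (n - v) * v)
        + (n - 1) * v ^ 2 * (u * (1 - u)) := by positivity
  linarith

lemma log_lower (n : ℝ) (hn : 2 ≤ n) : 2 ≤ (2 * n - 1) * Real.log (n / (n - 1)) := by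
  -- log (1 + 1/(n-1)) ≥ 2a/(a+2) with a = 1/(n-1)
  have ha : 0 ≤ 1 / (n - 1) := by
    apply div_nonneg <;> linarith
  have h := Real.le_log_one_add_of_nonneg ha
  have hn1 : n - 1 ≠ 0 := by intro h; linarith
  have h2 : 2 * n - 1 ≠ 0 := by intro h; linarith
  have e1 : 1 + 1 / (n - 1) = n / (n - 1) := by field_simp; ring
  have e2 : 2 * (1 / (n - 1)) / (1 / (n - 1) + 2) = 2 / (2 * n - 1) := by
    have : 1 / (n - 1) + 2 = (2 * n - 1) / (n - 1) := by field_simp; ring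
    rw [this]; field_simp
  rw [e1, e2, div_le_iff₀ (by linarith)] at h
  linarith

theorem stmt14 (N : ℕ) (hN : 2 ≤ N) :
    sSup {r : ℝ | ∃ t ∈ Set.Icc (0 : ℝ) 1, ∃ B : Set ℝ, MeasurableSet B ∧
        B ⊆ Set.Icc (0 : ℝ) 1 ∧ 0 < (rhoN N B).toReal ∧
        r = |(rhoT N t B).toReal / (rhoN N B).toReal - 1|}
      = (N : ℝ) * Real.log ((N : ℝ) / ((N : ℝ) - 1)) - 1 := by
  have hn : (2 : ℝ) ≤ N := by exact_mod_cast hN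
  have hLow := log_lower (N : ℝ) hn
  set n : ℝ := (N : ℝ) with hndef
  set L : ℝ := Real.log (n / (n - 1)) with hL
  have hLpos : 0 < L := by
    by_contra h
    push Not at h
    nlinarith
  have hU : ∀ t ∈ Set.Icc (0 : ℝ) 1, ∀ B : Set ℝ, MeasurableSet B → B ⊆ Set.Icc (0 : ℝ) 1 →
      rhoT N t B ≤ ENNReal.ofReal (n * L) * rhoN N B := by
    intro t ht B hB hBI
    apply wd_le _ _ _ _ (by positivity) B hB
    intro x hx
    have hx' := hBI hx
    have hp := poly_upper n (1 - x) (1 - t) hn (by linarith [hx'.2]) (by linarith [hx'.1])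
      (by linarith [ht.2]) (by linarith [ht.1])
    have hD : 0 < n - (1 - x) * (1 - t) := by nlinarith [hx'.1, hx'.2, ht.1, ht.2]
    have hb : 0 < x + n - 1 := by linarith [hx'.1]
    have e : n * L * (L⁻¹ / (x + n - 1)) = n / (x + n - 1) := by field_simp
    rw [← hndef, ← hL, e, div_le_div_iff₀ (by positivity) hb]
    nlinarith
  have hLo : ∀ t ∈ Set.Icc (0 : ℝ) 1, ∀ B : Set ℝ, MeasurableSet B → B ⊆ Set.Icc (0 : ℝ) 1 →
      rhoN N B ≤ ENNReal.ofReal (1 / ((n - 1) * L)) * rhoT N t B := by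
    intro t ht B hB hBI
    have hn1 : 0 < n - 1 := by linarith
    apply wd_le _ _ _ _ (by positivity) B hB
    intro x hx
    have hx' := hBI hx
    have hp := poly_lower n (1 - x) (1 - t) hn (by linarith [hx'.2]) (by linarith [hx'.1])
      (by linarith [ht.2]) (by linarith [ht.1])
    have hD : 0 < n - (1 - x) * (1 - t) := by nlinarith [hx'.1, hx'.2, ht.1, ht.2]
    have hb : 0 < x + n - 1 := by linarith [hx'.1]
    rw [← hndef, ← hL]
    have e1 : L⁻¹ / (x + n - 1) = 1 / (L * (x + n - 1)) := by field_simp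
    have e2 : 1 / ((n - 1) * L) * (n * (n - 1 + t) / (n - (1 - x) * (1 - t)) ^ 2)
      = (n * (n - 1 + t)) / ((n - 1) * L * (n - (1 - x) * (1 - t)) ^ 2) := by field_simp
    rw [e1, e2, div_le_div_iff₀ (by positivity) (by positivity)]
    have := mul_le_mul_of_nonneg_left hp hLpos.le
    nlinarith
  have hex : ∀ δ : ℝ, 0 < δ → δ ≤ 1 → ∃ a ∈ {r : ℝ | ∃ t ∈ Set.Icc (0 : ℝ) 1, ∃ B : Set ℝ,
        MeasurableSet B ∧ B ⊆ Set.Icc (0 : ℝ) 1 ∧ 0 < (rhoN N B).toReal ∧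
        r = |(rhoT N t B).toReal / (rhoN N B).toReal - 1|}, L * (n - δ) - 1 ≤ a := by
    intro δ hδ0 hδ1
    have hI : Set.Icc (1 - δ) 1 ⊆ Set.Icc (0 : ℝ) 1 := Set.Icc_subset_Icc (by linarith) le_rfl
    have h1 : (1 : ℝ) ∈ Set.Icc (0 : ℝ) 1 := by simp
    have hT : rhoT N 1 (Set.Icc (1 - δ) 1) = ENNReal.ofReal δ := by
      have hc : ∀ x : ℝ, n * (n - 1 + 1) / (n - (1 - x) * (1 - 1)) ^ 2 = 1 := by
        intro x
        have : n ≠ 0 := by linarith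
        have e : n - (1 - x) * (1 - 1) = n := by ring
        rw [e]; field_simp; ring
      unfold rhoT
      simp only [← hndef, hc]
      rw [withDensity_apply _ measurableSet_Icc]
      simp [Measure.restrict_apply measurableSet_Icc, Set.inter_eq_left.mpr hI]
    have hu := hU 1 h1 _ measurableSet_Icc hI
    have hl := hLo 1 h1 _ measurableSet_Icc hI
    have hfin : rhoN N (Set.Icc (1 - δ) 1) ≠ ⊤ := by
      apply ne_top_of_le_ne_top _ hl
      rw [hT]
      exact ENNReal.mul_ne_top ENNReal.ofReal_ne_top ENNReal.ofReal_ne_top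
    have hne : rhoN N (Set.Icc (1 - δ) 1) ≠ 0 := by
      intro h0
      rw [h0, hT, mul_zero] at hu
      simp at hu
      linarith
    have hpos : 0 < (rhoN N (Set.Icc (1 - δ) 1)).toReal := ENNReal.toReal_pos hne hfin
    refine ⟨_, ⟨1, h1, _, measurableSet_Icc, hI, hpos, rfl⟩, ?_⟩
    refine le_trans ?_ (le_abs_self _)
    have hnd : 0 < n - δ := by linarith
    have hs : rhoN N (Set.Icc (1 - δ) 1) ≤
        ENNReal.ofReal (1 / (L * (n - δ))) * rhoT N 1 (Set.Icc (1 - δ) 1) := by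
      apply wd_le _ _ _ _ (by positivity) _ measurableSet_Icc
      intro x hx
      rw [← hndef, ← hL]
      have hb : 0 < x + n - 1 := by linarith [hx.1]
      have e : n - (1 - x) * (1 - 1) = n := by ring
      have e1 : L⁻¹ / (x + n - 1) = 1 / (L * (x + n - 1)) := by field_simp
      have e2 : n * (n - 1 + 1) / n ^ 2 = 1 := by
        have : n ≠ 0 := by linarith
        field_simp; ring
      rw [e, e1, e2, mul_one]
      apply one_div_le_one_div_of_le (by positivity)
      exact mul_le_mul_of_nonneg_left (by linarith [hx.1]) hLpos.le
    have hs' := ENNReal.toReal_mono (by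
      rw [hT]; exact ENNReal.mul_ne_top ENNReal.ofReal_ne_top ENNReal.ofReal_ne_top) hs
    rw [ENNReal.toReal_mul, ENNReal.toReal_ofReal (by positivity), div_mul_eq_mul_div, one_mul,
      le_div_iff₀ (by positivity)] at hs'
    have : L * (n - δ) ≤ (rhoT N 1 (Set.Icc (1 - δ) 1)).toReal /
        (rhoN N (Set.Icc (1 - δ) 1)).toReal := by
      rw [le_div_iff₀ hpos]; linarith
    linarith
  apply csSup_eq_of_forall_le_of_forall_lt_exists_gt
  · obtain ⟨a, ha, -⟩ := hex 1 one_pos le_rfl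
    exact ⟨a, ha⟩
  · rintro r ⟨t, ht, B, hB, hBI, hpos, rfl⟩
    have hn1 : 0 < n - 1 := by linarith
    have hfin : rhoN N B ≠ ⊤ := (ENNReal.toReal_pos_iff.mp hpos).2.ne
    have hu := hU t ht B hB hBI
    have hl := hLo t ht B hB hBI
    have hm := ENNReal.mul_ne_top (ENNReal.ofReal_ne_top (r := n * L)) hfin
    have hTfin : rhoT N t B ≠ ⊤ := ne_top_of_le_ne_top hm hu
    have hu' := ENNReal.toReal_mono hm hu
    have hl' := ENNReal.toReal_mono (ENNReal.mul_ne_top ENNReal.ofReal_ne_top hTfin) hl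
    rw [ENNReal.toReal_mul, ENNReal.toReal_ofReal (by positivity), ← div_le_iff₀ hpos] at hu'
    rw [ENNReal.toReal_mul, ENNReal.toReal_ofReal (by positivity), div_mul_eq_mul_div, one_mul,
      le_div_iff₀ (by positivity), mul_comm, ← le_div_iff₀ hpos] at hl'
    rw [abs_le]
    constructor <;> nlinarith
  · intro w hw
    have hd : 0 < n * L - 1 - w := by linarith
    have hq : 0 < (n * L - 1 - w) / (2 * L) := by positivity
    obtain ⟨a, ha, h⟩ := hex (min 1 ((n * L - 1 - w) / (2 * L))) (lt_min one_pos hq)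
      (min_le_left _ _)
    refine ⟨a, ha, lt_of_lt_of_le ?_ h⟩
    have h3 := mul_le_mul_of_nonneg_left (min_le_right 1 ((n * L - 1 - w) / (2 * L))) hLpos.le
    have e : L * ((n * L - 1 - w) / (2 * L)) = (n * L - 1 - w) / 2 := by field_simp
    rw [e] at h3
    nlinarith
end

section
/- For every integer N ≥ 2 and all x, t ∈ [0,1], 1 + N² Σ_{i=N+1}^∞ 1/i² − N Σ_{i=N}^∞ 1/i² ≤ (x+N−1)(t+N−1) Σ_{i=N}^∞ 1/(x+i+t−1)² ≤ 1 + (N−1)² Σ_{i=N}^∞ 1/i². -/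
open MeasureTheory Set Real Filter

/-- the trigamma series -/
noncomputable def TT (y : ℝ) : ℝ := ∑' i : ℕ, 1 / (y + (i : ℝ)) ^ 2

theorem summ_TT (y : ℝ) : Summable (fun i : ℕ => 1 / (y + (i : ℝ)) ^ 2) := by
  have h := (Real.summable_one_div_nat_add_rpow y 2).2 (by norm_num)
  refine h.congr (fun i => ?_)
  rw [show (2 : ℝ) = ((2 : ℕ) : ℝ) by norm_num, Real.rpow_natCast, sq_abs, add_comm]

theorem tele_le {f h : ℕ → ℝ} (hf : Summable f) (hh : Tendsto h atTop (nhds 0))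
    (hle : ∀ i, h i - h (i + 1) ≤ f i) : h 0 ≤ ∑' i, f i := by
  have h1 := hf.hasSum.tendsto_sum_nat
  have h2 : Tendsto (fun n => h 0 - h n) atTop (nhds (h 0 - 0)) := tendsto_const_nhds.sub hh
  rw [sub_zero] at h2
  refine le_of_tendsto_of_tendsto' h2 h1 (fun n => ?_)
  rw [← Finset.sum_range_sub']
  exact Finset.sum_le_sum (fun i _ => hle i)

theorem inv_tend (y : ℝ) : Tendsto (fun i : ℕ => 1 / (y + (i : ℝ))) atTop (nhds 0) := by
  have : Tendsto (fun i : ℕ => y + (i : ℝ)) atTop atTop :=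
    tendsto_atTop_add_const_left _ _ tendsto_natCast_atTop_atTop
  simp only [one_div]
  exact this.inv_tendsto_atTop

theorem TT_succ (y : ℝ) : TT y = 1 / y ^ 2 + TT (y + 1) := by
  unfold TT
  rw [(summ_TT y).tsum_eq_zero_add]
  congr 1
  · simp
  · refine tsum_congr (fun i => ?_)
    push_cast
    ring_nf

theorem TT_lower {y : ℝ} (hy : 1 ≤ y) : 1 / y ≤ TT y := by
  have := tele_le (summ_TT y) (inv_tend y) (fun i => ?_)
  · simp only [Nat.cast_zero, add_zero] at this
    exact this
  · have hi : (0 : ℝ) ≤ i := i.cast_nonneg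
    have hu : 0 < y + i := by linarith
    push_cast
    rw [← add_assoc]
    generalize y + (i : ℝ) = u at *
    have : 1 / u - 1 / (u + 1) = 1 / (u * (u + 1)) := by field_simp; ring
    rw [this]
    apply one_div_le_one_div_of_le (by positivity)
    nlinarith

theorem TT_upper {y : ℝ} (hy : 1 ≤ y) : TT y ≤ 1 / (y - 1 / 2) := by
  have t0 := (inv_tend (y - 1 / 2)).neg
  rw [neg_zero] at t0
  have := tele_le (summ_TT y).neg t0 (fun i => ?_)
  · rw [tsum_neg] at this
    simp only [Nat.cast_zero, add_zero] at this
    unfold TT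
    linarith
  · have hi : (0 : ℝ) ≤ i := i.cast_nonneg
    have hu : 1 ≤ y + i := by linarith
    push_cast
    rw [show y - 1 / 2 + (i : ℝ) = (y + i) - 1 / 2 by ring,
      show y - 1 / 2 + ((i : ℝ) + 1) = (y + i) + 1 / 2 by ring]
    generalize y + (i : ℝ) = u at *
    have h1 : 0 < u - 1 / 2 := by linarith
    have h2 : 0 < u + 1 / 2 := by linarith
    have : 1 / (u - 1 / 2) - 1 / (u + 1 / 2) = 1 / ((u - 1 / 2) * (u + 1 / 2)) := by
      rw [div_sub_div _ _ h1.ne' h2.ne']; congr 1; ring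
    have h3 : 1 / u ^ 2 ≤ 1 / ((u - 1 / 2) * (u + 1 / 2)) := by
      apply one_div_le_one_div_of_le (by positivity)
      nlinarith
    linarith

theorem TT_R {y z : ℝ} (hy : 1 ≤ y) (hyz : y ≤ z) :
    (1 / y + 1 / 2 * (1 / y) ^ 2) - (1 / z + 1 / 2 * (1 / z) ^ 2) ≤ TT y - TT z := by
  have ht : ∀ y : ℝ, Tendsto (fun i : ℕ => 1 / (y + (i : ℝ)) + 1 / 2 * (1 / (y + (i : ℝ))) ^ 2)
      atTop (nhds 0) := fun y => by
    have t1 := (inv_tend y).add (((inv_tend y).pow 2).const_mul (1 / 2))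
    rwa [show (0 : ℝ) + 1 / 2 * 0 ^ 2 = 0 by norm_num] at t1
  have t0 := (ht y).sub (ht z)
  rw [sub_zero] at t0
  have := tele_le ((summ_TT y).sub (summ_TT z)) t0 (fun i => ?_)
  · rw [(summ_TT y).tsum_sub (summ_TT z)] at this
    simp only [Nat.cast_zero, add_zero] at this
    exact this
  · have hi : (0 : ℝ) ≤ i := i.cast_nonneg
    have hu : 1 ≤ y + i := by linarith
    have huv : y + i ≤ z + i := by linarith
    push_cast
    rw [← add_assoc, ← add_assoc]
    generalize y + (i : ℝ) = u at *
    generalize z + (i : ℝ) = v at *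
    have key : ∀ u : ℝ, 1 ≤ u → 1 / u ^ 2 = (1 / u + 1 / 2 * (1 / u) ^ 2)
        - (1 / (u + 1) + 1 / 2 * (1 / (u + 1)) ^ 2) + 1 / (2 * u ^ 2 * (u + 1) ^ 2) := by
      intro u hu
      have : u ≠ 0 := by linarith
      have : u + 1 ≠ 0 := by linarith
      field_simp
      ring
    have h3 : 1 / (2 * v ^ 2 * (v + 1) ^ 2) ≤ 1 / (2 * u ^ 2 * (u + 1) ^ 2) := by
      apply one_div_le_one_div_of_le (by positivity)
      gcongr
    have := key u hu
    have := key v (by linarith)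
    linarith

theorem TT_S {y z : ℝ} (hz : 1 ≤ z) (hzy : z ≤ y) :
    TT z - TT y ≤ 1 / (z - 1 / 2) - 1 / (y - 1 / 2) := by
  have t0 := (inv_tend (y - 1 / 2)).sub (inv_tend (z - 1 / 2))
  rw [sub_zero] at t0
  have := tele_le ((summ_TT y).sub (summ_TT z)) t0 (fun i => ?_)
  · rw [(summ_TT y).tsum_sub (summ_TT z)] at this
    simp only [Nat.cast_zero, add_zero] at this
    unfold TT
    linarith
  · have hi : (0 : ℝ) ≤ i := i.cast_nonneg
    have hu : 1 ≤ z + i := by linarith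
    have huv : z + i ≤ y + i := by linarith
    push_cast
    rw [show y - 1 / 2 + (i : ℝ) = (y + i) - 1 / 2 by ring,
      show y - 1 / 2 + ((i : ℝ) + 1) = (y + i) + 1 / 2 by ring,
      show z - 1 / 2 + (i : ℝ) = (z + i) - 1 / 2 by ring,
      show z - 1 / 2 + ((i : ℝ) + 1) = (z + i) + 1 / 2 by ring]
    generalize y + (i : ℝ) = v at *
    generalize z + (i : ℝ) = u at *
    have key : ∀ u : ℝ, 1 ≤ u → 1 / u ^ 2 = 1 / (u - 1 / 2) - 1 / (u + 1 / 2)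
        - 1 / (u ^ 2 * (4 * u ^ 2 - 1)) := by
      intro u hu
      have h0 : u ≠ 0 := by linarith
      have h1 : 2 * u - 1 ≠ 0 := by linarith
      have h2 : 2 * u + 1 ≠ 0 := by linarith
      rw [show u - 1 / 2 = (2 * u - 1) / 2 by ring, show u + 1 / 2 = (2 * u + 1) / 2 by ring,
        show 4 * u ^ 2 - 1 = (2 * u - 1) * (2 * u + 1) by ring]
      obtain ⟨a, ha⟩ : ∃ a, a = 2 * u - 1 := ⟨_, rfl⟩
      obtain ⟨b, hb⟩ : ∃ b, b = 2 * u + 1 := ⟨_, rfl⟩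
      rw [← ha] at h1 ⊢
      rw [← hb] at h2 ⊢
      field_simp
      rw [ha, hb]
      ring
    have h3 : 1 / (v ^ 2 * (4 * v ^ 2 - 1)) ≤ 1 / (u ^ 2 * (4 * u ^ 2 - 1)) := by
      have : 0 < 4 * u ^ 2 - 1 := by nlinarith
      apply one_div_le_one_div_of_le (by positivity)
      gcongr
    have := key u hu
    have := key v (by linarith)
    linarith

theorem mono1 {y z : ℝ} (hy : 1 ≤ y) (hyz : y ≤ z) : z * TT z ≤ y * TT y := by
  have h1 := TT_R hy hyz
  have h2 := TT_upper (hy.trans hyz)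
  have hz : 1 ≤ z := hy.trans hyz
  have h3 : 1 / (z - 1 / 2) ≤ 1 / z + 1 / z ^ 2 := by
    rw [show 1 / z + 1 / z ^ 2 = (z + 1) / z ^ 2 by field_simp,
      div_le_div_iff₀ (by linarith) (by positivity)]
    nlinarith
  have h4 : y * ((1 / y + 1 / 2 * (1 / y) ^ 2) - (1 / z + 1 / 2 * (1 / z) ^ 2))
      ≤ y * (TT y - TT z) := mul_le_mul_of_nonneg_left h1 (by linarith)
  have h5 : (z - y) * TT z ≤ (z - y) * (1 / z + 1 / z ^ 2) :=
    mul_le_mul_of_nonneg_left (h2.trans h3) (by linarith)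
  have h6 : y * ((1 / y + 1 / 2 * (1 / y) ^ 2) - (1 / z + 1 / 2 * (1 / z) ^ 2))
      - (z - y) * (1 / z + 1 / z ^ 2) = (z - y) ^ 2 / (2 * y * z ^ 2) := by
    have : y ≠ 0 := by linarith
    have : z ≠ 0 := by linarith
    field_simp
    ring
  have h7 : 0 ≤ (z - y) ^ 2 / (2 * y * z ^ 2) := by positivity
  linarith

theorem mono2 {y z : ℝ} (hz : 1 ≤ z) (hzy : z ≤ y) : (z - 1) * TT z ≤ (y - 1) * TT y := by
  have h1 := TT_S hz hzy
  have hy : 1 ≤ y := hz.trans hzy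
  have h2 := TT_lower hy
  have h4 := mul_le_mul_of_nonneg_left h1 (show 0 ≤ z - 1 by linarith)
  have h5 := mul_le_mul_of_nonneg_left h2 (show 0 ≤ y - z by linarith)
  have h6 : (y - z) * (1 / y) - (z - 1) * (1 / (z - 1 / 2) - 1 / (y - 1 / 2))
      = (y - z) * (y - z + 1 / 2) / (y * (2 * z - 1) * (y - 1 / 2)) := by
    have h0 : y ≠ 0 := by linarith
    obtain ⟨a, ha⟩ : ∃ a, a = z - 1 / 2 := ⟨_, rfl⟩
    obtain ⟨b, hb⟩ : ∃ b, b = y - 1 / 2 := ⟨_, rfl⟩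
    have h1 : a ≠ 0 := by rw [ha]; linarith
    have h2 : b ≠ 0 := by rw [hb]; linarith
    rw [← ha, ← hb, show 2 * z - 1 = 2 * a by rw [ha]; ring]
    field_simp
    rw [ha, hb]
    ring
  have h7 : 0 ≤ (y - z) * (y - z + 1 / 2) / (y * (2 * z - 1) * (y - 1 / 2)) := by
    have : 0 ≤ y - z := by linarith
    have : 0 < 2 * z - 1 := by linarith
    have : 0 < y - 1 / 2 := by linarith
    positivity
  linarith

theorem cvx {p q a b : ℝ} (hp : 0 ≤ p) (hq : 0 ≤ q) (hpq : p + q = 1) (ha : 0 < a) (hb : 0 < b) :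
    1 / (p * a + q * b) ^ 2 ≤ p * (1 / a ^ 2) + q * (1 / b ^ 2) := by
  have h := (convexOn_zpow (-2) (𝕜 := ℝ)).2 (mem_Ioi.2 ha) (mem_Ioi.2 hb) hp hq hpq
  simp only [smul_eq_mul, zpow_neg] at h
  norm_cast at h
  simpa only [one_div] using h

theorem upper {M l : ℝ} (hM : 1 ≤ M) (h0 : 0 ≤ l) (h1 : l ≤ 1) :
    (M + l) ^ 2 * TT (M + 2 * l) ≤ M ^ 2 * TT M := by
  have hpos : 0 < M + l := by linarith
  set p := (1 - l) * M / (M + l) with hp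
  set q := l * (M + 1) / (M + l) with hq
  have hp0 : 0 ≤ p := div_nonneg (mul_nonneg (by linarith) (by linarith)) hpos.le
  have hq0 : 0 ≤ q := div_nonneg (mul_nonneg (by linarith) (by linarith)) hpos.le
  have hpq : p + q = 1 := by rw [hp, hq]; field_simp; ring
  have hM2 : TT (M + 1) ≤ 1 / (M + 1 / 2) := by
    have := TT_upper (y := M + 1) (by linarith)
    rwa [show M + 1 - 1 / 2 = M + 1 / 2 by ring] at this
  have hend : (M + 1) ^ 2 * TT (M + 2) ≤ M ^ 2 * TT M := by
    have e1 := TT_succ M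
    have e2 := TT_succ (M + 1)
    rw [show M + 1 + 1 = M + 2 by ring] at e2
    have e3 : TT (M + 2) = TT (M + 1) - 1 / (M + 1) ^ 2 := by linarith
    rw [e1, e3]
    have a1 : (M + 1) ^ 2 * (1 / (M + 1) ^ 2) = 1 := by
      have : M + 1 ≠ 0 := by linarith
      field_simp
    have a2 : M ^ 2 * (1 / M ^ 2) = 1 := by
      have : M ≠ 0 := by linarith
      field_simp
    have a3 : (M + 1 / 2) * TT (M + 1) ≤ 1 := by
      rw [le_div_iff₀ (by linarith)] at hM2
      linarith
    nlinarith
  have hsum : (M + l) ^ 2 * TT (M + 2 * l) ≤ p * (M ^ 2 * TT M) + q * ((M + 1) ^ 2 * TT (M + 2)) := by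
    unfold TT
    simp only [← tsum_mul_left]
    have s1 := ((summ_TT M).mul_left (M ^ 2)).mul_left p
    have s2 := ((summ_TT (M + 2)).mul_left ((M + 1) ^ 2)).mul_left q
    rw [← s1.tsum_add s2]
    refine ((summ_TT (M + 2 * l)).mul_left _).tsum_le_tsum (fun i => ?_) (s1.add s2)
    have hi : (0 : ℝ) ≤ i := i.cast_nonneg
    have hMp : 0 < M := by linarith
    have hc := cvx hp0 hq0 hpq (a := (M + i) / M) (b := (M + 2 + i) / (M + 1))
      (by positivity) (by positivity)
    have e : p * ((M + i) / M) + q * ((M + 2 + i) / (M + 1)) = (M + 2 * l + i) / (M + l) := by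
      rw [hp, hq]; field_simp; ring
    rw [e] at hc
    simpa only [div_pow, one_div_div, mul_one_div] using hc
  have := mul_le_mul_of_nonneg_left hend hq0
  calc _ ≤ _ := hsum
    _ ≤ p * (M ^ 2 * TT M) + q * (M ^ 2 * TT M) := by linarith
    _ = M ^ 2 * TT M := by rw [← add_mul, hpq, one_mul]

theorem stmt15 (N : ℕ) (hN : 2 ≤ N) (x t : ℝ)
    (hx : x ∈ Set.Icc (0 : ℝ) 1) (ht : t ∈ Set.Icc (0 : ℝ) 1) :
    1 + (N : ℝ) ^ 2 * (∑' i : ℕ, 1 / ((i : ℝ) + (N : ℝ) + 1) ^ 2)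
        - (N : ℝ) * (∑' i : ℕ, 1 / ((i : ℝ) + (N : ℝ)) ^ 2)
      ≤ (x + (N : ℝ) - 1) * (t + (N : ℝ) - 1)
          * ∑' i : ℕ, 1 / (x + ((i : ℝ) + (N : ℝ)) + t - 1) ^ 2 ∧
    (x + (N : ℝ) - 1) * (t + (N : ℝ) - 1)
        * (∑' i : ℕ, 1 / (x + ((i : ℝ) + (N : ℝ)) + t - 1) ^ 2)
      ≤ 1 + ((N : ℝ) - 1) ^ 2 * ∑' i : ℕ, 1 / ((i : ℝ) + (N : ℝ)) ^ 2 := by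
  obtain ⟨hx0, hx1⟩ := hx
  obtain ⟨ht0, ht1⟩ := ht
  have hN' : (2 : ℝ) ≤ N := by exact_mod_cast hN
  obtain ⟨M, hM⟩ : ∃ M : ℝ, M = (N : ℝ) - 1 := ⟨_, rfl⟩
  have hNM : (N : ℝ) = M + 1 := by linarith
  rw [hNM] at *
  have e1 : (∑' i : ℕ, 1 / ((i : ℝ) + (M + 1) + 1) ^ 2) = TT (M + 1 + 1) :=
    tsum_congr (fun i => by ring_nf)
  have e2 : (∑' i : ℕ, 1 / ((i : ℝ) + (M + 1)) ^ 2) = TT (M + 1) :=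
    tsum_congr (fun i => by ring_nf)
  have e3 : (∑' i : ℕ, 1 / (x + ((i : ℝ) + (M + 1)) + t - 1) ^ 2) = TT (M + (x + t)) :=
    tsum_congr (fun i => by ring_nf)
  rw [e1, e2, e3]
  have hM1 : 1 ≤ M := by linarith
  have hpos : 0 ≤ TT (M + (x + t)) := tsum_nonneg (fun i => by positivity)
  constructor
  · have e4 := TT_succ (M + 1)
    have e5 : (M + 1) ^ 2 * (1 / (M + 1) ^ 2) = 1 := by
      have : M + 1 ≠ 0 := by linarith
      field_simp
    have e6 : 1 + (M + 1) ^ 2 * TT (M + 1 + 1) - (M + 1) * TT (M + 1)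
        = M * ((M + 1) * TT (M + 1)) := by
      have : TT (M + 1 + 1) = TT (M + 1) - 1 / (M + 1) ^ 2 := by linarith
      rw [this, mul_sub, e5]; ring
    rw [e6]
    rcases le_total (x + t) 1 with h | h
    · have h1 := mono1 (y := M + (x + t)) (z := M + 1) (by linarith) (by linarith)
      have h2 := mul_le_mul_of_nonneg_left h1 (show 0 ≤ M by linarith)
      have h3 : M * (M + (x + t)) ≤ (x + (M + 1) - 1) * (t + (M + 1) - 1) := by nlinarith
      have h4 := mul_le_mul_of_nonneg_right h3 hpos
      linarith
    · have h1 := mono2 (y := M + (x + t)) (z := M + 1) (by linarith) (by linarith)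
      have h2 := mul_le_mul_of_nonneg_left h1 (show 0 ≤ M + 1 by linarith)
      have h3 : (M + 1) * (M + (x + t) - 1) ≤ (x + (M + 1) - 1) * (t + (M + 1) - 1) := by
        nlinarith [mul_nonneg (sub_nonneg.2 hx1) (sub_nonneg.2 ht1)]
      have h4 := mul_le_mul_of_nonneg_right h3 hpos
      linarith
  · have h1 := upper hM1 (l := (x + t) / 2) (by linarith) (by linarith)
    rw [show M + 2 * ((x + t) / 2) = M + (x + t) by ring] at h1
    have h3 : (x + (M + 1) - 1) * (t + (M + 1) - 1) ≤ (M + (x + t) / 2) ^ 2 := by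
      nlinarith [sq_nonneg (x - t)]
    have h4 := mul_le_mul_of_nonneg_right h3 hpos
    have e7 : M ^ 2 * TT M = 1 + (M + 1 - 1) ^ 2 * TT (M + 1) := by
      have : M ≠ 0 := by linarith
      rw [TT_succ M, mul_add]
      field_simp
      ring
    linarith
end
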